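/- Let S and V be complex vector spaces with dim S = 2 and dim V = n > 2. Consider the GL(S)-action on Hom(S,V) ⊕ Hom(V,S) ⊕ End(S) given by g·(x,y,p) = (x g⁻¹, g y, g p g⁻¹). The ring of GL(S)-invariant polynomial functions is generated by the entries of x∘y ∈ End(V), the entries of x∘p∘y ∈ End(V), together with det(p) and Tr(p). -/

import Mathlib

/-!
Scalar matrices act on `x`, `y`, `p` with weights `-1`, `1`, `0`, so every monomial of an invariant
has as many factors from `x` as from `y`. The invariant is therefore a polynomial in the entries of
the `2 × 2` matrices `p` and `y_j x_k` (a column of `y` times a row of `x`), all of which `GL(S)`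
acts on by conjugation.

For a tuple of `2 × 2` matrices, let `A` be an algebra containing the traces of all words `M` in
the tuple. The `A`-algebra generated by the entries of `g M adj(g)`, for `g` generic, is stable
under Cayley's operator `Ω = det (∂ / ∂g)`. If `h` is an invariant polynomial in the tuple, with
homogeneous components `h_k`, then substituting `g M adj(g)` for `M` in `h` gives
`∑ det(g) ^ k h_k`, and applying `Ω` repeatedly and setting `g = 0` isolates each `h_k` up to a
nonzero integer factor. So `h_k ∈ A`.

Finally, a word containing some `y_j x_k` has as trace a product of entries of `x p ^ i y`, and the
powers of `p` reduce to `1` and `p` by Cayley–Hamilton.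
-/

namespace MatrixInvariants

open MvPolynomial Matrix

section OmegaProcess

variable {R : Type*} [CommRing R]

/-- The polarisation of Cayley's Ω operator `cayleyOmega` in the entries of a `2 × 2` matrix,
as a derivation in its second argument: Ω satisfies the Leibniz rule up to this bracket. -/
noncomputable def omegaBracket (u : MvPolynomial (Fin 2 × Fin 2) R) :
    Derivation R (MvPolynomial (Fin 2 × Fin 2) R) (MvPolynomial (Fin 2 × Fin 2) R) :=
  pderiv (0, 0) u • pderiv (1, 1) + pderiv (1, 1) u • pderiv (0, 0)
    - pderiv (0, 1) u • pderiv (1, 0) - pderiv (1, 0) u • pderiv (0, 1)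

/-- Cayley's Ω operator `det (∂ / ∂g)` on polynomials in the entries of a `2 × 2` matrix `g`. -/
noncomputable def cayleyOmega :
    MvPolynomial (Fin 2 × Fin 2) R →ₗ[R] MvPolynomial (Fin 2 × Fin 2) R :=
  (pderiv (0, 0)).toLinearMap ∘ₗ (pderiv (1, 1)).toLinearMap
    - (pderiv (0, 1)).toLinearMap ∘ₗ (pderiv (1, 0)).toLinearMap

lemma omegaBracket_apply (u v : MvPolynomial (Fin 2 × Fin 2) R) :
    omegaBracket u v = pderiv (0, 0) u * pderiv (1, 1) v + pderiv (1, 1) u * pderiv (0, 0) v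
      - pderiv (0, 1) u * pderiv (1, 0) v - pderiv (1, 0) u * pderiv (0, 1) v := rfl

lemma cayleyOmega_apply (u : MvPolynomial (Fin 2 × Fin 2) R) :
    cayleyOmega u = pderiv (0, 0) (pderiv (1, 1) u) - pderiv (0, 1) (pderiv (1, 0) u) := rfl

lemma omegaBracket_comm (u v : MvPolynomial (Fin 2 × Fin 2) R) :
    omegaBracket u v = omegaBracket v u := by
  simp only [omegaBracket_apply]
  ring

lemma cayleyOmega_mul (u v : MvPolynomial (Fin 2 × Fin 2) R) :
    cayleyOmega (u * v) = u * cayleyOmega v + v * cayleyOmega u + omegaBracket u v := by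
  simp only [cayleyOmega_apply, omegaBracket_apply, Derivation.leibniz, smul_eq_mul, map_add]
  ring

lemma cayleyOmega_C (r : R) : cayleyOmega (C r) = 0 := by
  simp [cayleyOmega_apply]

lemma derivation_mem_adjoin {A S : Type*} [CommRing A] [CommRing S] [Algebra A S]
    (D : Derivation A S S) {s : Set S} {B : Subalgebra A S} (hs : Algebra.adjoin A s ≤ B)
    (hD : ∀ v ∈ s, D v ∈ B) {v : S} (hv : v ∈ Algebra.adjoin A s) : D v ∈ B := by
  induction hv using Algebra.adjoin_induction with
  | mem v hv => exact hD v hv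
  | algebraMap r => simp
  | add v w _ _ ihv ihw => simpa using add_mem ihv ihw
  | mul v w hv hw ihv ihw =>
    rw [D.leibniz]
    exact add_mem (mul_mem (hs hv) ihw) (mul_mem (hs hw) ihv)

section Adjoin

variable {A : Type*} [CommRing A] [Algebra A R] {s : Set (MvPolynomial (Fin 2 × Fin 2) R)}

lemma omegaBracket_mem_adjoin (hs : ∀ u ∈ s, ∀ v ∈ s, omegaBracket u v ∈ Algebra.adjoin A s)
    {u v : MvPolynomial (Fin 2 × Fin 2) R} (hu : u ∈ Algebra.adjoin A s)
    (hv : v ∈ Algebra.adjoin A s) : omegaBracket u v ∈ Algebra.adjoin A s := by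
  refine derivation_mem_adjoin ((omegaBracket u).restrictScalars A) le_rfl (fun w hw => ?_) hv
  change omegaBracket u w ∈ _
  rw [omegaBracket_comm]
  exact derivation_mem_adjoin ((omegaBracket w).restrictScalars A) le_rfl (hs w hw) hu

lemma cayleyOmega_mem_adjoin (hs : ∀ u ∈ s, ∀ v ∈ s, omegaBracket u v ∈ Algebra.adjoin A s)
    (hs' : ∀ u ∈ s, cayleyOmega u ∈ Algebra.adjoin A s) {u : MvPolynomial (Fin 2 × Fin 2) R}
    (hu : u ∈ Algebra.adjoin A s) : cayleyOmega u ∈ Algebra.adjoin A s := by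
  induction hu using Algebra.adjoin_induction with
  | mem u hu => exact hs' u hu
  | algebraMap r =>
    rw [IsScalarTower.algebraMap_apply A R, MvPolynomial.algebraMap_eq, cayleyOmega_C]
    exact zero_mem _
  | add u v _ _ ihu ihv => simpa using add_mem ihu ihv
  | mul u v hu hv ihu ihv =>
    rw [cayleyOmega_mul]
    exact add_mem (add_mem (mul_mem hu ihv) (mul_mem hv ihu)) (omegaBracket_mem_adjoin hs hu hv)

end Adjoin

lemma cayleyOmega_aeval_det (q : Polynomial R) :
    cayleyOmega (Polynomial.aeval (mvPolynomialX (Fin 2) (Fin 2) R).det q) =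
      Polynomial.aeval (mvPolynomialX (Fin 2) (Fin 2) R).det
        (Polynomial.derivative (Polynomial.derivative (Polynomial.X * q))) := by
  simp only [cayleyOmega_apply, Derivation.map_aeval, Derivation.leibniz, smul_eq_mul]
  simp [det_fin_two, pderiv_X]
  ring

/-- The matrix `g M adj(g)` for the generic `2 × 2` matrix `g`: a denominator-free form of
conjugation by `g`. -/
noncomputable def conjAdjugate (M : Matrix (Fin 2) (Fin 2) R) :
    Matrix (Fin 2) (Fin 2) (MvPolynomial (Fin 2 × Fin 2) R) :=
  mvPolynomialX (Fin 2) (Fin 2) R * M.map C * (mvPolynomialX (Fin 2) (Fin 2) R).adjugate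

lemma pderiv_conjAdjugate (M : Matrix (Fin 2) (Fin 2) R) (i j a b : Fin 2) :
    pderiv (i, j) (conjAdjugate M a b) =
      (single i j 1 * M.map C * (mvPolynomialX (Fin 2) (Fin 2) R).adjugate
        + mvPolynomialX (Fin 2) (Fin 2) R * M.map C * (single i j 1).adjugate :
          Matrix _ _ (MvPolynomial (Fin 2 × Fin 2) R)) a b := by
  fin_cases i <;> fin_cases j <;> fin_cases a <;> fin_cases b <;>
    simp [conjAdjugate, mul_apply, adjugate_fin_two, pderiv_X, single_apply] <;> ring

lemma cayleyOmega_conjAdjugate (M : Matrix (Fin 2) (Fin 2) R) (a b : Fin 2) :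
    cayleyOmega (conjAdjugate M a b) = C ((1 : Matrix _ _ R) a b * M.trace) := by
  fin_cases a <;> fin_cases b <;>
    simp [cayleyOmega_apply, conjAdjugate, mul_apply, adjugate_fin_two, trace_fin_two, pderiv_X]
  ring

lemma omegaBracket_conjAdjugate (M N : Matrix (Fin 2) (Fin 2) R) (a b c d : Fin 2) :
    omegaBracket (conjAdjugate M a b) (conjAdjugate N c d) =
      (1 : Matrix _ _ ℤ) a d • conjAdjugate (N * M) c b
      + (1 : Matrix _ _ ℤ) b c • (conjAdjugate (M * N) a d
        - conjAdjugate (M.adjugate * N) a d - conjAdjugate (M * N.adjugate) a d)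
      + (1 : Matrix _ _ ℤ) a b • conjAdjugate (M.adjugate * N) c d
      + (1 : Matrix _ _ ℤ) c d • conjAdjugate (M * N.adjugate) a b := by
  rw [omegaBracket_apply]
  simp only [pderiv_conjAdjugate]
  simp only [conjAdjugate, mul_apply, Matrix.add_apply, map_apply, Fin.sum_univ_two,
    adjugate_fin_two, of_apply, mvPolynomialX_apply]
  fin_cases a <;> fin_cases b <;> fin_cases c <;> fin_cases d <;>
    simp only [Fin.zero_eta, Fin.mk_one, Fin.isValue, cons_val_zero, cons_val_one, cons_val',
      cons_val_fin_one, single_apply, one_apply, zero_ne_one, one_ne_zero, reduceIte, and_self,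
      and_true, and_false, one_smul, zero_smul, map_mul, map_add, map_neg] <;>
    ring

end OmegaProcess

section Covariants

variable {K R : Type*} [CommRing K] [CommRing R] [Algebra K R]

/-- The covariants of a monoid `W` of `2 × 2` matrices, with coefficients in the subalgebra `A`:
the `A`-algebra generated by the entries of `g M adj(g)` for `M ∈ W`, where `g` is generic. -/
noncomputable def covariantAlgebra (A : Subalgebra K R) (W : Submonoid (Matrix (Fin 2) (Fin 2) R)) :
    Subalgebra A (MvPolynomial (Fin 2 × Fin 2) R) :=
  Algebra.adjoin A {u | ∃ M ∈ W, ∃ a b, u = conjAdjugate M a b}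

variable {A : Subalgebra K R} {W : Submonoid (Matrix (Fin 2) (Fin 2) R)}

lemma conjAdjugate_mem_covariantAlgebra {M : Matrix (Fin 2) (Fin 2) R} (hM : M ∈ W)
    (a b : Fin 2) : conjAdjugate M a b ∈ covariantAlgebra A W :=
  Algebra.subset_adjoin ⟨M, hM, a, b, rfl⟩

lemma C_mul_mem_covariantAlgebra {r : R} (hr : r ∈ A) {u : MvPolynomial (Fin 2 × Fin 2) R}
    (hu : u ∈ covariantAlgebra A W) : C r * u ∈ covariantAlgebra A W := by
  rw [← smul_eq_C_mul]
  exact (covariantAlgebra A W).smul_mem hu (⟨r, hr⟩ : A)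

lemma adjugate_eq_trace_smul_one_sub (M : Matrix (Fin 2) (Fin 2) R) :
    M.adjugate = M.trace • 1 - M := by
  ext a b
  fin_cases a <;> fin_cases b <;> simp [adjugate_fin_two, trace_fin_two]

lemma conjAdjugate_smul_sub (r : R) (M N : Matrix (Fin 2) (Fin 2) R) (a b : Fin 2) :
    conjAdjugate (r • M - N) a b = C r * conjAdjugate M a b - conjAdjugate N a b := by
  simp only [conjAdjugate, mul_apply, map_apply, Matrix.sub_apply, Matrix.smul_apply, smul_eq_mul,
    map_sub, map_mul, Fin.sum_univ_two]
  ring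

lemma conjAdjugate_adjugate_mul_mem_covariantAlgebra (hA : ∀ M ∈ W, M.trace ∈ A)
    {M N : Matrix (Fin 2) (Fin 2) R} (hM : M ∈ W) (hN : N ∈ W) (a b : Fin 2) :
    conjAdjugate (M.adjugate * N) a b ∈ covariantAlgebra A W := by
  rw [adjugate_eq_trace_smul_one_sub, Matrix.sub_mul, smul_mul, Matrix.one_mul,
    conjAdjugate_smul_sub]
  exact sub_mem (C_mul_mem_covariantAlgebra (hA M hM) (conjAdjugate_mem_covariantAlgebra hN a b))
    (conjAdjugate_mem_covariantAlgebra (mul_mem hM hN) a b)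

lemma conjAdjugate_mul_adjugate_mem_covariantAlgebra (hA : ∀ M ∈ W, M.trace ∈ A)
    {M N : Matrix (Fin 2) (Fin 2) R} (hM : M ∈ W) (hN : N ∈ W) (a b : Fin 2) :
    conjAdjugate (M * N.adjugate) a b ∈ covariantAlgebra A W := by
  rw [adjugate_eq_trace_smul_one_sub, Matrix.mul_sub, Matrix.mul_smul, Matrix.mul_one,
    conjAdjugate_smul_sub]
  exact sub_mem (C_mul_mem_covariantAlgebra (hA N hN) (conjAdjugate_mem_covariantAlgebra hM a b))
    (conjAdjugate_mem_covariantAlgebra (mul_mem hM hN) a b)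

lemma omegaBracket_conjAdjugate_mem_covariantAlgebra (hA : ∀ M ∈ W, M.trace ∈ A)
    {M N : Matrix (Fin 2) (Fin 2) R} (hM : M ∈ W) (hN : N ∈ W) (a b c d : Fin 2) :
    omegaBracket (conjAdjugate M a b) (conjAdjugate N c d) ∈ covariantAlgebra A W := by
  have hNM (i j : Fin 2) := conjAdjugate_mem_covariantAlgebra (A := A) (mul_mem hN hM) i j
  have hMN (i j : Fin 2) := conjAdjugate_mem_covariantAlgebra (A := A) (mul_mem hM hN) i j
  have hM' (i j : Fin 2) := conjAdjugate_adjugate_mul_mem_covariantAlgebra hA hM hN i j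
  have hN' (i j : Fin 2) := conjAdjugate_mul_adjugate_mem_covariantAlgebra hA hM hN i j
  rw [omegaBracket_conjAdjugate]
  exact add_mem (add_mem (add_mem (zsmul_mem (hNM c b) _)
    (zsmul_mem (sub_mem (sub_mem (hMN a d) (hM' a d)) (hN' a d)) _))
    (zsmul_mem (hM' c d) _)) (zsmul_mem (hN' a b) _)

lemma cayleyOmega_mem_covariantAlgebra (hA : ∀ M ∈ W, M.trace ∈ A)
    {u : MvPolynomial (Fin 2 × Fin 2) R} (hu : u ∈ covariantAlgebra A W) :
    cayleyOmega u ∈ covariantAlgebra A W := by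
  refine cayleyOmega_mem_adjoin ?_ ?_ hu
  · rintro _ ⟨M, hM, a, b, rfl⟩ _ ⟨N, hN, c, d, rfl⟩
    exact omegaBracket_conjAdjugate_mem_covariantAlgebra hA hM hN a b c d
  · rintro _ ⟨M, hM, a, b, rfl⟩
    have hr : (1 : Matrix _ _ R) a b * M.trace ∈ A := by
      refine mul_mem ?_ (hA M hM)
      rw [one_apply]
      split_ifs
      exacts [one_mem A, zero_mem A]
    rw [cayleyOmega_conjAdjugate, ← mul_one (C _)]
    exact C_mul_mem_covariantAlgebra hr (one_mem _)

lemma constantCoeff_mem_of_mem_covariantAlgebra {u : MvPolynomial (Fin 2 × Fin 2) R}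
    (hu : u ∈ covariantAlgebra A W) : constantCoeff u ∈ A := by
  induction hu using Algebra.adjoin_induction with
  | mem u hu =>
    obtain ⟨M, -, a, b, rfl⟩ := hu
    simp [conjAdjugate, mul_apply]
  | algebraMap r =>
    rw [IsScalarTower.algebraMap_apply A R, MvPolynomial.algebraMap_eq, constantCoeff_C]
    exact r.2
  | add u v _ _ hu hv => simpa using add_mem hu hv
  | mul u v _ _ hu hv => simpa using mul_mem hu hv

end Covariants

section CayleyProcess

lemma aeval_mem_subalgebra {K S σ : Type*} [CommRing K] [CommRing S] [Algebra K S]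
    (B : Subalgebra K S) {f : σ → S} (hf : ∀ i, f i ∈ B) (h : MvPolynomial σ K) :
    aeval f h ∈ B :=
  Algebra.adjoin_le (Set.range_subset_iff.2 hf)
    (Algebra.adjoin_range_eq_range_aeval K f ▸ AlgHom.mem_range_self _ h)

lemma aeval_aeval_X_mul_C {K R S σ : Type*} [CommRing K] [CommRing R] [CommRing S] [Algebra K R]
    [Algebra K S] [Algebra R S] [IsScalarTower K R S] (t : S) (f : σ → R) (h : MvPolynomial σ K) :
    Polynomial.aeval t (aeval (fun i => Polynomial.X * Polynomial.C (f i)) h) =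
      aeval (fun i => t * algebraMap R S (f i)) h := by
  rw [← AlgHom.restrictScalars_apply K, comp_aeval_apply]
  congr 2
  ext i
  rw [AlgHom.restrictScalars_apply, map_mul, Polynomial.aeval_X, Polynomial.aeval_C]

variable {K R : Type*} [Field K] [CharZero K] [CommRing R] [Algebra K R] {A : Subalgebra K R}
  {W : Submonoid (Matrix (Fin 2) (Fin 2) R)}

lemma coeff_mem_of_aeval_det_mem_covariantAlgebra (hA : ∀ M ∈ W, M.trace ∈ A) {q : Polynomial R}
    (hq : Polynomial.aeval (mvPolynomialX (Fin 2) (Fin 2) R).det q ∈ covariantAlgebra A W)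
    (k : ℕ) : q.coeff k ∈ A := by
  induction k generalizing q with
  | zero =>
    have h := constantCoeff_mem_of_mem_covariantAlgebra hq
    rwa [Polynomial.aeval_def, Polynomial.hom_eval₂, MvPolynomial.algebraMap_eq,
      show constantCoeff (mvPolynomialX (Fin 2) (Fin 2) R).det = 0 by simp [det_fin_two],
      Polynomial.eval₂_at_zero, RingHom.comp_apply, constantCoeff_C] at h
  | succ k ih =>
    have h := ih ((cayleyOmega_aeval_det q).symm ▸ cayleyOmega_mem_covariantAlgebra hA hq)
    have hcoeff : (Polynomial.derivative (Polynomial.derivative (Polynomial.X * q))).coeff k =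
        ((k + 2 : K) * (k + 1)) • q.coeff (k + 1) := by
      rw [Polynomial.coeff_derivative, Polynomial.coeff_derivative, Polynomial.coeff_X_mul,
        Algebra.smul_def]
      push_cast [map_mul, map_add, map_natCast, map_one, map_ofNat]
      ring
    have hk : (k + 2 : K) * (k + 1) ≠ 0 := by
      exact_mod_cast mul_ne_zero (k + 1).succ_ne_zero k.succ_ne_zero
    rw [hcoeff] at h
    simpa only [smul_smul, inv_mul_cancel₀ hk, one_smul] using
      A.smul_mem h ((k + 2 : K) * (k + 1))⁻¹

theorem aeval_mem_of_aeval_conjAdjugate_eq {σ : Type*} {M : σ → Matrix (Fin 2) (Fin 2) R}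
    (hA : ∀ N ∈ Submonoid.closure (Set.range M), N.trace ∈ A)
    {h : MvPolynomial (σ × Fin 2 × Fin 2) K}
    (hinv : aeval (fun i => conjAdjugate (M i.1) i.2.1 i.2.2) h =
      aeval (fun i => (mvPolynomialX (Fin 2) (Fin 2) R).det * C (M i.1 i.2.1 i.2.2)) h) :
    aeval (fun i => M i.1 i.2.1 i.2.2) h ∈ A := by
  have hdet : Polynomial.aeval (mvPolynomialX (Fin 2) (Fin 2) R).det
      (aeval (fun i => Polynomial.X * Polynomial.C (M i.1 i.2.1 i.2.2)) h) ∈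
        covariantAlgebra A (Submonoid.closure (Set.range M)) := by
    rw [aeval_aeval_X_mul_C, MvPolynomial.algebraMap_eq, ← hinv]
    exact aeval_mem_subalgebra ((covariantAlgebra A _).restrictScalars K) (fun i =>
      conjAdjugate_mem_covariantAlgebra (Submonoid.subset_closure (Set.mem_range_self _)) _ _) h
  have hone := aeval_aeval_X_mul_C (1 : R) (fun i : σ × Fin 2 × Fin 2 => M i.1 i.2.1 i.2.2) h
  simp only [one_mul, Algebra.algebraMap_self, RingHom.id_apply, Polynomial.aeval_eq_sum_range,
    one_pow, smul_eq_mul, mul_one] at hone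
  rw [← hone]
  exact sum_mem fun k _ => coeff_mem_of_aeval_det_mem_covariantAlgebra hA hdet k

end CayleyProcess

lemma eq_of_forall_algHom_eq {K σ τ : Type*} [Field K] [Infinite K]
    {d u v : MvPolynomial τ (MvPolynomial σ K)} (hd : d ≠ 0)
    (huv : ∀ φ : MvPolynomial τ (MvPolynomial σ K) →ₐ[K] K, φ d ≠ 0 → φ u = φ v) : u = v := by
  refine mul_left_cancel₀ hd ((sumAlgEquiv K τ σ).symm.injective (MvPolynomial.funext fun ξ => ?_))
  have hφ := huv ((aeval ξ).comp (sumAlgEquiv K τ σ).symm)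
  simp only [AlgHom.comp_apply, AlgEquiv.coe_toAlgHom, aeval_eq_eval] at hφ
  rw [map_mul, map_mul, map_mul, map_mul]
  rcases eq_or_ne (eval ξ ((sumAlgEquiv K τ σ).symm d)) 0 with hξ | hξ
  · rw [hξ, zero_mul, zero_mul]
  · rw [hφ hξ]

section Weight

variable {K σ : Type*} {w : σ → ℤ}

section Scaling

variable [Field K]

lemma aeval_zpow_mul_X_monomial {t : K} (ht : t ≠ 0) (m : σ →₀ ℕ) (a : K) :
    aeval (fun i => C (t ^ w i) * X i) (monomial m a) =
      monomial m (t ^ Finsupp.weight w m * a) := by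
  have hpow : (m.prod fun i k => (t ^ w i) ^ k) = t ^ Finsupp.weight w m := by
    rw [Finsupp.weight_apply]
    induction m using Finsupp.induction_linear with
    | zero => simp
    | add f g hf hg =>
      rw [Finsupp.prod_add_index' (by simp) (by simp [pow_add]), hf, hg,
        Finsupp.sum_add_index' (by simp) (by simp [add_mul]), zpow_add₀ ht]
    | single i k => simp [mul_comm _ (w i), _root_.zpow_mul]
  rw [aeval_monomial, monomial_eq, map_mul, ← hpow]
  simp only [mul_pow, Finsupp.prod_mul, ← map_pow, MvPolynomial.algebraMap_eq]
  rw [Finsupp.prod, Finsupp.prod, Finsupp.prod, map_prod]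
  ring

lemma coeff_aeval_zpow_mul_X {t : K} (ht : t ≠ 0) (m : σ →₀ ℕ) (P : MvPolynomial σ K) :
    coeff m (aeval (fun i => C (t ^ w i) * X i) P) = t ^ Finsupp.weight w m * coeff m P := by
  classical
  induction P using MvPolynomial.induction_on' with
  | monomial u a =>
    rw [aeval_zpow_mul_X_monomial ht, coeff_monomial, coeff_monomial]
    split_ifs with h
    · rw [h]
    · rw [mul_zero]
  | add P Q hP hQ => rw [map_add, coeff_add, hP, hQ, coeff_add, mul_add]

lemma isWeightedHomogeneous_zero_of_eval_zpow_mul_eq [CharZero K] {P : MvPolynomial σ K}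
    (hP : ∀ ξ : σ → K, eval (fun i => 2 ^ w i * ξ i) P = eval ξ P) :
    IsWeightedHomogeneous w P 0 := by
  have hfix : aeval (fun i => C ((2 : K) ^ w i) * X i) P = P := by
    refine MvPolynomial.funext fun ξ => ?_
    rw [← hP ξ]
    simp only [← aeval_eq_eval, comp_aeval_apply, map_mul, algHom_C, Algebra.algebraMap_self,
      RingHom.id_apply, aeval_X]
  intro m hm
  have hpow : (2 : K) ^ Finsupp.weight w m = 1 := by
    have h := coeff_aeval_zpow_mul_X (w := w) two_ne_zero m P
    rw [hfix] at h
    exact (right_eq_mul₀ hm).1 h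
  have hpow' : (2 : ℚ) ^ Finsupp.weight w m = 1 :=
    Rat.cast_injective (α := K) (by push_cast; exact hpow)
  exact (zpow_eq_one_iff_right₀ zero_le_two (by norm_num)).1 hpow'

end Scaling

lemma exists_mem_support_of_weight_eq_zero {m : σ →₀ ℕ} (hm : m ≠ 0)
    (hw : Finsupp.weight w m = 0) (h0 : ∀ i ∈ m.support, w i ≠ 0) :
    (∃ i ∈ m.support, 0 < w i) ∧ ∃ i ∈ m.support, w i < 0 := by
  obtain ⟨k, hk⟩ := Finsupp.support_nonempty_iff.2 hm
  have hne : (m k : ℤ) * w k ≠ 0 := mul_ne_zero (by simpa using hk) (h0 k hk)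
  have hsum : ∑ i ∈ m.support, (m i : ℤ) * w i = 0 := by
    simpa [Finsupp.weight_apply, Finsupp.sum] using hw
  constructor
  · obtain ⟨i, hi, hpos⟩ := Finset.exists_pos_of_sum_zero_of_exists_nonzero _ hsum ⟨k, hk, hne⟩
    exact ⟨i, hi, pos_of_mul_pos_right hpos (Int.natCast_nonneg _)⟩
  · obtain ⟨i, hi, hpos⟩ := Finset.exists_pos_of_sum_zero_of_exists_nonzero
      (fun i => -((m i : ℤ) * w i)) (by rw [Finset.sum_neg_distrib, hsum, neg_zero])
      ⟨k, hk, neg_ne_zero.2 hne⟩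
    refine ⟨i, hi, ?_⟩
    have : 0 < (m i : ℤ) * -w i := by simpa using hpos
    exact neg_pos.1 (pos_of_mul_pos_right this (Int.natCast_nonneg _))

lemma single_add_single_le {m : σ →₀ ℕ} {i j : σ} (hij : i ≠ j) (hi : i ∈ m.support)
    (hj : j ∈ m.support) : Finsupp.single i 1 + Finsupp.single j 1 ≤ m := by
  classical
  rw [Finsupp.mem_support_iff] at hi hj
  intro k
  simp only [Finsupp.add_apply, Finsupp.single_apply]
  split_ifs <;> grind

variable [CommRing K]

lemma monomial_mem_of_weight_eq_zero (hw : ∀ i, -1 ≤ w i ∧ w i ≤ 1)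
    {B : Subalgebra K (MvPolynomial σ K)} (hB : ∀ i, w i = 0 → X i ∈ B)
    (hB' : ∀ i j, w i = 1 → w j = -1 → X i * X j ∈ B) (a : K) (m : σ →₀ ℕ)
    (hm : Finsupp.weight w m = 0) : monomial m a ∈ B := by
  induction m using WellFoundedLT.induction with
  | ind m ih =>
  rcases eq_or_ne m 0 with rfl | hm0
  · exact B.algebraMap_mem a
  have split (s : σ →₀ ℕ) (hs : 0 < s) (hsm : s ≤ m) (hsw : Finsupp.weight w s = 0)
      (hsB : monomial s 1 ∈ B) : monomial m a ∈ B := by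
    obtain ⟨m', rfl⟩ := le_iff_exists_add.1 hsm
    rw [← one_mul a, ← monomial_mul]
    exact mul_mem hsB (ih m' (lt_add_of_pos_left m' hs) (by rwa [map_add, hsw, zero_add] at hm))
  by_cases h0 : ∃ i ∈ m.support, w i = 0
  · obtain ⟨i, hi, hwi⟩ := h0
    exact split (Finsupp.single i 1) (pos_iff_ne_zero.2 (by simp))
      (Finsupp.single_le_iff.2 (Nat.one_le_iff_ne_zero.2 (Finsupp.mem_support_iff.1 hi)))
      (by rw [Finsupp.weight_single, hwi, smul_zero]) (hB i hwi)
  · push Not at h0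
    obtain ⟨⟨i, hi, hwi⟩, j, hj, hwj⟩ := exists_mem_support_of_weight_eq_zero hm0 hm h0
    have hi1 : w i = 1 := by linarith [(hw i).2]
    have hj1 : w j = -1 := by linarith [(hw j).1]
    refine split (Finsupp.single i 1 + Finsupp.single j 1) (pos_iff_ne_zero.2 (by simp)) ?_
      (by simp [Finsupp.weight_single, hi1, hj1]) ?_
    · exact single_add_single_le (by rintro rfl; omega) hi hj
    · simpa only [X, monomial_mul, mul_one] using hB' i j hi1 hj1

lemma mem_of_isWeightedHomogeneous_zero (hw : ∀ i, -1 ≤ w i ∧ w i ≤ 1)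
    {B : Subalgebra K (MvPolynomial σ K)} (hB : ∀ i, w i = 0 → X i ∈ B)
    (hB' : ∀ i j, w i = 1 → w j = -1 → X i * X j ∈ B) {P : MvPolynomial σ K}
    (hP : IsWeightedHomogeneous w P 0) : P ∈ B := by
  rw [P.as_sum]
  exact sum_mem fun m hm =>
    monomial_mem_of_weight_eq_zero hw hB hB' _ m (hP (mem_support_iff.1 hm))

end Weight

section Coordinates

/-- The linear coordinates on `Hom(S, V) ⊕ Hom(V, S) ⊕ End(S)`, where `ι` indexes a basis of `V`
and `dim S = 2`. -/
abbrev Coordinate (ι : Type*) := (ι × Fin 2) ⊕ (Fin 2 × ι) ⊕ (Fin 2 × Fin 2)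

variable {ι R S : Type*}

/-- The coordinate vector of the point `(x, y, p)`, at which polynomials are evaluated. -/
def coordinates (x : Matrix ι (Fin 2) R) (y : Matrix (Fin 2) ι R) (p : Matrix (Fin 2) (Fin 2) R) :
    Coordinate ι → R :=
  Sum.elim (fun ij => x ij.1 ij.2) (Sum.elim (fun ij => y ij.1 ij.2) fun ij => p ij.1 ij.2)

lemma exists_coordinates_eq (ξ : Coordinate ι → R) : ∃ x y p, coordinates x y p = ξ :=
  ⟨fun i a => ξ (.inl (i, a)), fun a i => ξ (.inr (.inl (a, i))), fun a b => ξ (.inr (.inr (a, b))),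
    by ext (_ | _ | _) <;> rfl⟩

lemma coordinates_inj {x x' : Matrix ι (Fin 2) R} {y y' : Matrix (Fin 2) ι R}
    {p p' : Matrix (Fin 2) (Fin 2) R} :
    coordinates x y p = coordinates x' y' p' ↔ x = x' ∧ y = y' ∧ p = p' := by
  refine ⟨fun h => ⟨?_, ?_, ?_⟩, fun ⟨hx, hy, hp⟩ => hx ▸ hy ▸ hp ▸ rfl⟩
  · ext i a
    exact congrFun h (.inl (i, a))
  · ext a i
    exact congrFun h (.inr (.inl (a, i)))
  · ext a b
    exact congrFun h (.inr (.inr (a, b)))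

lemma comp_coordinates (φ : R → S) (x : Matrix ι (Fin 2) R) (y : Matrix (Fin 2) ι R)
    (p : Matrix (Fin 2) (Fin 2) R) :
    φ ∘ coordinates x y p = coordinates (x.map φ) (y.map φ) (p.map φ) := by
  ext (_ | _ | _) <;> rfl

variable [CommRing R] [CommRing S]

/-- The values at `(x, y, p)` of the basic invariants: the entries of `x y` and of `x p y`,
followed by `det p` and `tr p`. -/
def invariantGenerators (x : Matrix ι (Fin 2) R) (y : Matrix (Fin 2) ι R)
    (p : Matrix (Fin 2) (Fin 2) R) : (ι × ι) ⊕ (ι × ι) ⊕ Fin 2 → R :=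
  Sum.elim (fun ij => (x * y) ij.1 ij.2)
    (Sum.elim (fun ij => (x * p * y) ij.1 ij.2) ![p.det, p.trace])

/-- The `2 × 2` matrices on which `GL₂` acts by conjugation: `p`, at index `none`, and the product
of the `j`-th column of `y` and the `k`-th row of `x`, at index `some (j, k)`. -/
def matrixTuple (x : Matrix ι (Fin 2) R) (y : Matrix (Fin 2) ι R) (p : Matrix (Fin 2) (Fin 2) R) :
    Option (ι × ι) → Matrix (Fin 2) (Fin 2) R
  | none => p
  | some (j, k) => vecMulVec (y.col j) (x.row k)

variable (x : Matrix ι (Fin 2) R) (y : Matrix (Fin 2) ι R) (p : Matrix (Fin 2) (Fin 2) R)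

lemma comp_invariantGenerators (φ : R →+* S) :
    φ ∘ invariantGenerators x y p = invariantGenerators (x.map φ) (y.map φ) (p.map φ) := by
  ext (_ | _ | i)
  · simp [invariantGenerators, mul_apply]
  · simp [invariantGenerators, mul_apply]
  · fin_cases i <;> simp [invariantGenerators, det_fin_two, trace_fin_two]

lemma matrixTuple_map (φ : R →+* S) (s : Option (ι × ι)) :
    (matrixTuple x y p s).map φ = matrixTuple (x.map φ) (y.map φ) (p.map φ) s := by
  rcases s with _ | ⟨j, k⟩
  · rfl
  · ext a b
    exact map_mul φ _ _

lemma matrixTuple_mul (g h : Matrix (Fin 2) (Fin 2) R) (s : Option (ι × ι)) :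
    matrixTuple (x * h) (g * y) (g * p * h) s = g * matrixTuple x y p s * h := by
  rcases s with _ | ⟨j, k⟩
  · rfl
  · simp only [matrixTuple, mul_vecMulVec, vecMulVec_mul]
    rfl

lemma matrixTuple_smul (r : R) (s : Option (ι × ι)) :
    matrixTuple (r • x) y (r • p) s = r • matrixTuple x y p s := by
  rcases s with _ | ⟨j, k⟩
  · rfl
  · ext a b
    exact mul_left_comm _ _ _

end Coordinates

section Words

variable {K R ι : Type*} [CommRing K] [CommRing R] [Algebra K R]

lemma exists_pow_eq_smul_one_add_smul {A : Subalgebra K R} {p : Matrix (Fin 2) (Fin 2) R}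
    (htr : p.trace ∈ A) (hdet : p.det ∈ A) (k : ℕ) :
    ∃ r ∈ A, ∃ s ∈ A, p ^ k = r • 1 + s • p := by
  have hsq : p * p = p.trace • p - p.det • 1 := by
    rw [← mul_adjugate, adjugate_eq_trace_smul_one_sub, Matrix.mul_sub, Matrix.mul_smul,
      Matrix.mul_one, sub_sub_cancel]
  induction k with
  | zero => exact ⟨1, one_mem A, 0, zero_mem A, by simp⟩
  | succ k ih =>
    obtain ⟨r, hr, s, hs, hk⟩ := ih
    refine ⟨-(s * p.det), neg_mem (mul_mem hs hdet), r + s * p.trace,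
      add_mem hr (mul_mem hs htr), ?_⟩
    rw [pow_succ, hk, Matrix.add_mul, smul_mul, smul_mul, Matrix.one_mul, hsq]
    module

variable (K) (x : Matrix ι (Fin 2) R) (y : Matrix (Fin 2) ι R) (p : Matrix (Fin 2) (Fin 2) R)

/-- The algebra of polynomials in the basic invariants of `(x, y, p)`. -/
def invariantAlgebra : Subalgebra K R :=
  Algebra.adjoin K (Set.range (invariantGenerators x y p))

variable {K}

lemma trace_mem_invariantAlgebra : p.trace ∈ invariantAlgebra K x y p :=
  Algebra.subset_adjoin ⟨.inr (.inr 1), rfl⟩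

lemma det_mem_invariantAlgebra : p.det ∈ invariantAlgebra K x y p :=
  Algebra.subset_adjoin ⟨.inr (.inr 0), rfl⟩

lemma trace_pow_mem_invariantAlgebra (k : ℕ) : (p ^ k).trace ∈ invariantAlgebra K x y p := by
  obtain ⟨r, hr, s, hs, hk⟩ := exists_pow_eq_smul_one_add_smul
    (trace_mem_invariantAlgebra (K := K) x y p) (det_mem_invariantAlgebra x y p) k
  rw [hk, trace_add, trace_smul, trace_smul, trace_one, Fintype.card_fin]
  exact add_mem (mul_mem hr (natCast_mem _ 2)) (mul_mem hs (trace_mem_invariantAlgebra x y p))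

lemma mul_pow_mul_apply_mem_invariantAlgebra (k : ℕ) (i j : ι) :
    (x * p ^ k * y) i j ∈ invariantAlgebra K x y p := by
  obtain ⟨r, hr, s, hs, hk⟩ := exists_pow_eq_smul_one_add_smul
    (trace_mem_invariantAlgebra (K := K) x y p) (det_mem_invariantAlgebra x y p) k
  have hxy : (x * y) i j ∈ invariantAlgebra K x y p :=
    Algebra.subset_adjoin ⟨.inl (i, j), rfl⟩
  have hxpy : (x * p * y) i j ∈ invariantAlgebra K x y p :=
    Algebra.subset_adjoin ⟨.inr (.inl (i, j)), rfl⟩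
  rw [hk, Matrix.mul_add, Matrix.add_mul, Matrix.mul_smul, Matrix.mul_smul, Matrix.mul_one,
    smul_mul, smul_mul]
  exact add_mem (mul_mem hr hxy) (mul_mem hs hxpy)

lemma mul_word_mul_pow_mul_apply_mem_invariantAlgebra {N : Matrix (Fin 2) (Fin 2) R}
    (hN : N ∈ Submonoid.closure (Set.range (matrixTuple x y p))) (k : ℕ) (i j : ι) :
    (x * N * p ^ k * y) i j ∈ invariantAlgebra K x y p := by
  induction hN using Submonoid.closure_induction_right generalizing k j with
  | one =>
    rw [Matrix.mul_one]
    exact mul_pow_mul_apply_mem_invariantAlgebra x y p k i j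
  | mul_right N _ _ hM ih =>
    obtain ⟨_ | ⟨l, m⟩, rfl⟩ := hM
    · simpa only [matrixTuple, Matrix.mul_assoc, ← pow_succ'] using ih (k + 1) j
    · have hsplit : x * (N * matrixTuple x y p (some (l, m))) * p ^ k * y =
          vecMulVec ((x * N * p ^ 0 * y).col l) ((x * p ^ k * y).row m) := by
        rw [matrixTuple, mul_vecMulVec, mul_vecMulVec, vecMulVec_mul, vecMulVec_mul, pow_zero,
          Matrix.mul_one, mulVec_mulVec, vecMul_vecMul, Matrix.mul_assoc x (p ^ k)]
        rfl
      rw [hsplit]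
      exact mul_mem (ih 0 l) (mul_pow_mul_apply_mem_invariantAlgebra x y p k m j)

lemma trace_word_mul_pow_mem_invariantAlgebra {N : Matrix (Fin 2) (Fin 2) R}
    (hN : N ∈ Submonoid.closure (Set.range (matrixTuple x y p))) (k : ℕ) :
    (N * p ^ k).trace ∈ invariantAlgebra K x y p := by
  induction hN using Submonoid.closure_induction_right generalizing k with
  | one =>
    rw [Matrix.one_mul]
    exact trace_pow_mem_invariantAlgebra x y p k
  | mul_right N hN _ hM ih =>
    obtain ⟨_ | ⟨l, m⟩, rfl⟩ := hM
    · simpa only [matrixTuple, Matrix.mul_assoc, ← pow_succ'] using ih (k + 1)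
    · have hp : p ∈ Submonoid.closure (Set.range (matrixTuple x y p)) :=
        Submonoid.subset_closure ⟨none, rfl⟩
      have htrace : (N * matrixTuple x y p (some (l, m)) * p ^ k).trace =
          (x * (p ^ k * N) * p ^ 0 * y : Matrix ι ι R) m l := by
        rw [matrixTuple, mul_vecMulVec, vecMulVec_mul, trace_vecMulVec, dotProduct_comm,
          dotProduct_mulVec, vecMul_vecMul, pow_zero, Matrix.mul_one]
        rfl
      rw [htrace]
      exact mul_word_mul_pow_mul_apply_mem_invariantAlgebra x y p (mul_mem (pow_mem hp k) hN) 0 m l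

end Words

section GenericPoint

variable {K ι : Type*} [CommRing K]

/-- The weights of the action of the scalars in `GL(S)` on the coordinates. -/
def coordinateWeight : Coordinate ι → ℤ :=
  Sum.elim (fun _ => -1) (Sum.elim (fun _ => 1) fun _ => 0)

variable {x : Matrix ι (Fin 2) (MvPolynomial (Coordinate ι) K)}
  {y : Matrix (Fin 2) ι (MvPolynomial (Coordinate ι) K)}
  {p : Matrix (Fin 2) (Fin 2) (MvPolynomial (Coordinate ι) K)}

lemma exists_aeval_matrixTuple_eq (hX : coordinates x y p = X)
    {P : MvPolynomial (Coordinate ι) K} (hP : IsWeightedHomogeneous coordinateWeight P 0) :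
    ∃ h : MvPolynomial (Option (ι × ι) × Fin 2 × Fin 2) K,
      aeval (fun i => matrixTuple x y p i.1 i.2.1 i.2.2) h = P := by
  refine mem_of_isWeightedHomogeneous_zero (B := (aeval fun i : Option (ι × ι) × Fin 2 × Fin 2 =>
    matrixTuple x y p i.1 i.2.1 i.2.2).range) ?_ ?_ ?_ hP
  · rintro (_ | _ | _) <;> simp [coordinateWeight]
  · rintro (_ | _ | ⟨a, b⟩) hi
    · simp [coordinateWeight] at hi
    · simp [coordinateWeight] at hi
    · exact ⟨X (none, a, b), by rw [← hX]; exact aeval_X _ _⟩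
  · rintro (_ | ⟨a, j⟩ | _) (⟨k, b⟩ | _ | _) hi hj <;> try simp [coordinateWeight] at hi hj
    exact ⟨X (some (j, k), a, b), by rw [← hX]; exact aeval_X _ _⟩

section Specialization

variable {R : Type*} [CommRing R] [Algebra K R] (x' : Matrix ι (Fin 2) R)
  (y' : Matrix (Fin 2) ι R) (p' : Matrix (Fin 2) (Fin 2) R)

lemma map_aeval_coordinates (hX : coordinates x y p = X) :
    x.map (aeval (coordinates x' y' p')) = x' ∧ y.map (aeval (coordinates x' y' p')) = y' ∧
      p.map (aeval (coordinates x' y' p')) = p' := by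
  rw [← coordinates_inj, ← comp_coordinates, hX]
  ext i
  exact aeval_X _ i

lemma aeval_coordinates_aeval_matrixTuple (hX : coordinates x y p = X)
    (h : MvPolynomial (Option (ι × ι) × Fin 2 × Fin 2) K) :
    aeval (coordinates x' y' p') (aeval (fun i => matrixTuple x y p i.1 i.2.1 i.2.2) h) =
      aeval (fun i => matrixTuple x' y' p' i.1 i.2.1 i.2.2) h := by
  obtain ⟨hx, hy, hp⟩ := map_aeval_coordinates x' y' p' hX
  rw [comp_aeval_apply]
  congr 2
  ext i
  have hmap := matrixTuple_map x y p (aeval (coordinates x' y' p') : _ →ₐ[K] R).toRingHom i.1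
  simp only [AlgHom.toRingHom_eq_coe, RingHom.coe_coe, hx, hy, hp] at hmap
  exact congrFun₂ hmap i.2.1 i.2.2

lemma aeval_coordinates_aeval_invariantGenerators (hX : coordinates x y p = X)
    (Q : MvPolynomial ((ι × ι) ⊕ (ι × ι) ⊕ Fin 2) K) :
    aeval (coordinates x' y' p') (aeval (invariantGenerators x y p) Q) =
      aeval (invariantGenerators x' y' p') Q := by
  obtain ⟨hx, hy, hp⟩ := map_aeval_coordinates x' y' p' hX
  have hcomp := comp_invariantGenerators x y p (aeval (coordinates x' y' p') : _ →ₐ[K] R).toRingHom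
  simp only [AlgHom.toRingHom_eq_coe, RingHom.coe_coe, hx, hy, hp] at hcomp
  rw [comp_aeval_apply, ← hcomp]
  rfl

end Specialization

end GenericPoint

section Invariance

variable {K ι : Type*} [Field K]

/-- Invariance of a polynomial function on `Hom(S, V) ⊕ Hom(V, S) ⊕ End(S)` under the action
`g • (x, y, p) = (x g⁻¹, g y, g p g⁻¹)` of `GL(S)`. -/
def IsGLInvariant (P : MvPolynomial (Coordinate ι) K) : Prop :=
  ∀ (g : GL (Fin 2) K) (x : Matrix ι (Fin 2) K) (y : Matrix (Fin 2) ι K)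
    (p : Matrix (Fin 2) (Fin 2) K),
    eval (coordinates (x * (↑g⁻¹ : Matrix (Fin 2) (Fin 2) K)) ((↑g : Matrix (Fin 2) (Fin 2) K) * y)
      ((↑g : Matrix (Fin 2) (Fin 2) K) * p * (↑g⁻¹ : Matrix (Fin 2) (Fin 2) K))) P =
        eval (coordinates x y p) P

variable {P : MvPolynomial (Coordinate ι) K}

lemma IsGLInvariant.isWeightedHomogeneous_zero [CharZero K] (hP : IsGLInvariant P) :
    IsWeightedHomogeneous coordinateWeight P 0 := by
  refine isWeightedHomogeneous_zero_of_eval_zpow_mul_eq fun ξ => ?_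
  obtain ⟨x, y, p, rfl⟩ := exists_coordinates_eq ξ
  rw [← hP (GeneralLinearGroup.scalar (Fin 2) (Units.mk0 2 two_ne_zero)) x y p]
  congr 2
  rw [← map_inv]
  simp only [GeneralLinearGroup.coe_scalar]
  ext (_ | _ | _) <;> simp [coordinates, coordinateWeight, mul_comm]

lemma IsGLInvariant.eval_mul_adjugate (hP : IsGLInvariant P) (x : Matrix ι (Fin 2) K)
    (y : Matrix (Fin 2) ι K) (p : Matrix (Fin 2) (Fin 2) K) {g : Matrix (Fin 2) (Fin 2) K}
    (hg : g.det ≠ 0) :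
    eval (coordinates (x * g.adjugate) (g * y) (g * p * g.adjugate)) P =
      eval (coordinates (g.det • x) y (g.det • p)) P := by
  have hinv : g.det • (↑(GeneralLinearGroup.mkOfDetNeZero g hg)⁻¹ : Matrix (Fin 2) (Fin 2) K) =
      g.adjugate := by
    rw [coe_units_inv, Matrix.inv_def, Ring.inverse_eq_inv', smul_smul]
    exact (congrArg (· • g.adjugate) (mul_inv_cancel₀ hg)).trans (one_smul K _)
  rw [← hP (GeneralLinearGroup.mkOfDetNeZero g hg) (g.det • x) y, smul_mul, Matrix.mul_smul,
    smul_mul, ← Matrix.mul_smul, ← Matrix.mul_smul _ g.det, hinv]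
  rfl

lemma IsGLInvariant.aeval_mul_adjugate [Infinite K] (hP : IsGLInvariant P) {σ τ : Type*}
    (x : Matrix ι (Fin 2) (MvPolynomial τ (MvPolynomial σ K)))
    (y : Matrix (Fin 2) ι (MvPolynomial τ (MvPolynomial σ K)))
    (p : Matrix (Fin 2) (Fin 2) (MvPolynomial τ (MvPolynomial σ K)))
    {g : Matrix (Fin 2) (Fin 2) (MvPolynomial τ (MvPolynomial σ K))} (hg : g.det ≠ 0) :
    aeval (coordinates (x * g.adjugate) (g * y) (g * p * g.adjugate)) P =
      aeval (coordinates (g.det • x) y (g.det • p)) P := by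
  refine eq_of_forall_algHom_eq hg fun φ hφ => ?_
  have hdet : φ g.det = (g.map φ).det := φ.map_det g
  have hadj : g.adjugate.map φ = (g.map φ).adjugate := φ.map_adjugate g
  have h := hP.eval_mul_adjugate (x.map φ) (y.map φ) (p.map φ) (hdet ▸ hφ)
  have hcomp (x y p) : φ (aeval (coordinates x y p) P) =
      eval (coordinates (x.map φ) (y.map φ) (p.map φ)) P := by
    rw [comp_aeval_apply, ← comp_coordinates, ← aeval_eq_eval]
    rfl
  rw [hcomp, hcomp]
  simpa only [Matrix.map_mul, Matrix.map_smulₛₗ _ φ _ (map_mul φ _), hadj, hdet] using h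

theorem IsGLInvariant.mem_invariantAlgebra [CharZero K] (hP : IsGLInvariant P)
    {x : Matrix ι (Fin 2) (MvPolynomial (Coordinate ι) K)}
    {y : Matrix (Fin 2) ι (MvPolynomial (Coordinate ι) K)}
    {p : Matrix (Fin 2) (Fin 2) (MvPolynomial (Coordinate ι) K)} (hX : coordinates x y p = X) :
    P ∈ invariantAlgebra K x y p := by
  obtain ⟨h, rfl⟩ := exists_aeval_matrixTuple_eq hX hP.isWeightedHomogeneous_zero
  refine aeval_mem_of_aeval_conjAdjugate_eq (fun N hN => ?_) ?_
  · simpa using trace_word_mul_pow_mem_invariantAlgebra x y p hN 0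
  · have hconj := hP.aeval_mul_adjugate (x.map C) (y.map C) (p.map C)
      (det_mvPolynomialX_ne_zero (Fin 2) (MvPolynomial (Coordinate ι) K))
    rw [aeval_coordinates_aeval_matrixTuple _ _ _ hX,
      aeval_coordinates_aeval_matrixTuple _ _ _ hX] at hconj
    simp only [matrixTuple_mul, matrixTuple_smul, ← matrixTuple_map] at hconj
    exact hconj

end Invariance

end MatrixInvariants

open MatrixInvariants in
theorem stmt1_general {K ι : Type*} [Field K] [CharZero K]
    (f : Matrix ι (Fin 2) K → Matrix (Fin 2) ι K → Matrix (Fin 2) (Fin 2) K → K)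
    (hpoly : ∃ P : MvPolynomial ((ι × Fin 2) ⊕ (Fin 2 × ι) ⊕ (Fin 2 × Fin 2)) K,
      ∀ x y p, f x y p =
        MvPolynomial.eval (Sum.elim (fun ij => x ij.1 ij.2)
          (Sum.elim (fun ij => y ij.1 ij.2) (fun ij => p ij.1 ij.2))) P)
    (hinv : ∀ g : Matrix.GeneralLinearGroup (Fin 2) K, ∀ x y p,
      f (x * (↑g⁻¹ : Matrix (Fin 2) (Fin 2) K))
        ((↑g : Matrix (Fin 2) (Fin 2) K) * y)
        ((↑g : Matrix (Fin 2) (Fin 2) K) * p * (↑g⁻¹ : Matrix (Fin 2) (Fin 2) K))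
        = f x y p) :
    ∃ Q : MvPolynomial ((ι × ι) ⊕ (ι × ι) ⊕ Fin 2) K,
      ∀ x y p, f x y p =
        MvPolynomial.eval (Sum.elim (fun ij => (x * y) ij.1 ij.2)
          (Sum.elim (fun ij => (x * p * y) ij.1 ij.2) ![p.det, p.trace])) Q := by
  obtain ⟨P, hfP⟩ := hpoly
  have hP : IsGLInvariant P := fun g x y p =>
    (hfP _ _ _).symm.trans ((hinv g x y p).trans (hfP x y p))
  obtain ⟨x, y, p, hX⟩ := exists_coordinates_eq (MvPolynomial.X (R := K) : Coordinate ι → _)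
  have hmem := hP.mem_invariantAlgebra hX
  rw [invariantAlgebra, Algebra.adjoin_range_eq_range_aeval] at hmem
  obtain ⟨Q, rfl⟩ := hmem
  exact ⟨Q, fun x' y' p' => (hfP x' y' p').trans
    (aeval_coordinates_aeval_invariantGenerators x' y' p' hX Q)⟩

/-- For the `GL(S)`-action (`dim S = 2`) on
`Hom(S,V) ⊕ Hom(V,S) ⊕ End(S)` given by `g·(x,y,p) = (x g⁻¹, g y, g p g⁻¹)`,
every invariant polynomial function is a polynomial in the entries of `x∘y`,
the entries of `x∘p∘y`, together with `det p` and `Tr p`.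
Here `x : Matrix (Fin n) (Fin 2) ℂ` represents `x : S → V`,
`y : Matrix (Fin 2) (Fin n) ℂ` represents `y : V → S`, and `p : End(S)`. -/
theorem stmt1 (n : ℕ) (hn : 2 < n)
    (f : Matrix (Fin n) (Fin 2) ℂ → Matrix (Fin 2) (Fin n) ℂ →
      Matrix (Fin 2) (Fin 2) ℂ → ℂ)
    (hpoly : ∃ P : MvPolynomial ((Fin n × Fin 2) ⊕ (Fin 2 × Fin n) ⊕ (Fin 2 × Fin 2)) ℂ,
      ∀ x y p, f x y p =
        MvPolynomial.eval (Sum.elim (fun ij => x ij.1 ij.2)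
          (Sum.elim (fun ij => y ij.1 ij.2) (fun ij => p ij.1 ij.2))) P)
    (hinv : ∀ g : Matrix.GeneralLinearGroup (Fin 2) ℂ, ∀ x y p,
      f (x * (↑g⁻¹ : Matrix (Fin 2) (Fin 2) ℂ))
        ((↑g : Matrix (Fin 2) (Fin 2) ℂ) * y)
        ((↑g : Matrix (Fin 2) (Fin 2) ℂ) * p * (↑g⁻¹ : Matrix (Fin 2) (Fin 2) ℂ))
        = f x y p) :
    ∃ Q : MvPolynomial ((Fin n × Fin n) ⊕ (Fin n × Fin n) ⊕ Fin 2) ℂ,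
      ∀ x y p, f x y p =
        MvPolynomial.eval (Sum.elim (fun ij => (x * y) ij.1 ij.2)
          (Sum.elim (fun ij => (x * p * y) ij.1 ij.2) ![p.det, p.trace])) Q :=
  stmt1_general f hpoly hinv
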